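/- Assume the curve setup with counterclockwise orientation. Let x ∈ ℝ² be a point of the exterior domain, i.e. x is not in the range of l and, identifying ℝ² with ℂ via γ(s) = l₁(s) + i·l₂(s) and x with a complex number, ∫₀^L γ'(t)/(γ(t) − x) dt = 0. Let s₀ ∈ ℝ and y = l(s₀). Then π·(x − y)^⊥/‖x − y‖² = lim_{ε→0⁺} ∫_{{t ∈ [s₀ − L/2, s₀ + L/2] : |t − s₀| ≥ ε}} (((y − l(t))·l'(t))/‖y − l(t)‖²)·((x − l(t))/‖x − l(t)‖²) dt − ∫₀^L h(t)·((x − l(t))^⊥/‖x − l(t)‖²) dt, where h(t) = ((y − l(t))·n(t))/‖y − l(t)‖² for l(t) ≠ y, extended continuously by h(t) = (1/2)·l''(s₀)·n(s₀) when l(t) = y. -/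

import Mathlib

open Real MeasureTheory Filter Topology

/-- Dot product of two points of the plane `ℝ² ≃ ℂ`. -/
noncomputable def dotR (z w : ℂ) : ℝ := z.re * w.re + z.im * w.im

/-- The unit normal vector `n(s) = (l₂'(s), -l₁'(s))` of a curve `l`. -/
noncomputable def normalv (l : ℝ → ℂ) (s : ℝ) : ℂ := -Complex.I * deriv l s

open Classical in
/-- The double layer kernel `t ↦ ((l(s₀) - l(t))·n(t))/‖l(s₀) - l(t)‖²`, extended
continuously through the diagonal by `(1/2)·l''(s₀)·n(s₀)`. -/
noncomputable def Kdl (l : ℝ → ℂ) (s t : ℝ) : ℝ :=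
  if l s = l t then (1/2) * dotR (deriv (deriv l) s) (normalv l s)
  else dotR (l s - l t) (normalv l t) / ‖l s - l t‖ ^ 2

/-!
Let `D s u = ∫₀¹ l' (s + θ u) dθ` be the slope of the chord from `l s` to `l (s + u)`, which does
not vanish for `|u| < L`. Since `l' (s + u) / (l (s + u) - l s) = 1 / u + logDeriv (D s) u`, the
principal value of the Cauchy integral at the curve point `l s` is `P s = ∫ logDeriv (D s)` over
`[-L / 2, L / 2]`. As `exp (P s) = D s (L / 2) / D s (-L / 2) = -1`, the continuous function `P`
is a constant, an odd multiple of `π i`. To identify it, choose `l s` nearest to a point `z` off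
the curve: then `(l (s + u) - z) / D s u` has real part of the sign of `u`, so that its logarithm
varies by at most `π` in imaginary part, that is, the winding integral around `z` differs from
`P` by at most `π` in imaginary part. A point of winding number one and a point of winding number
zero together force `P = π i`.

On the other hand, the tangential kernel and the double layer kernel are the real and imaginary
parts of `l' t / (l s - l t)`, and by partial fractions the difference of the two integrands is
the conjugate of a constant multiple of `l' t / (l t - x) - l' t / (l t - l s)`, whose principal
value is `0 - P`.
-/

section Calculus

variable {E : Type*} [NormedAddCommGroup E] [NormedSpace ℝ E]

lemma hasDerivAt_integral_of_continuous_deriv {F F' : ℝ → ℝ → E} (a b u : ℝ)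
    (hF : ∀ u, Continuous (F u)) (hF' : Continuous (Function.uncurry F'))
    (hderiv : ∀ u θ, HasDerivAt (F · θ) (F' u θ) u) :
    HasDerivAt (fun u ↦ ∫ θ in a..b, F u θ) (∫ θ in a..b, F' u θ) u := by
  obtain ⟨C, hC⟩ := ((isCompact_closedBall u 1).prod
    (isCompact_uIcc (a := a) (b := b))).exists_bound_of_continuousOn hF'.continuousOn
  refine (intervalIntegral.hasDerivAt_integral_of_dominated_loc_of_deriv_le (bound := fun _ ↦ C)
    (Metric.closedBall_mem_nhds u one_pos) (.of_forall fun v ↦ (hF v).aestronglyMeasurable)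
    ((hF u).intervalIntegrable a b) (hF'.uncurry_left u).aestronglyMeasurable
    (.of_forall fun θ hθ v hv ↦ ?_) intervalIntegrable_const
    (.of_forall fun θ _ v _ ↦ hderiv v θ)).2
  exact hC (v, θ) ⟨hv, Set.uIoc_subset_uIcc hθ⟩

lemma continuous_intervalIntegral_of_continuousOn {X : Type*} [TopologicalSpace X]
    {f : X → ℝ → E} {a b : ℝ} (hab : a ≤ b)
    (hf : ContinuousOn (Function.uncurry f) (Set.univ ×ˢ Set.Icc a b)) :
    Continuous fun x ↦ ∫ t in a..b, f x t := by
  have hclamp : Continuous (Function.uncurry fun x t ↦ f x (Set.projIcc a b hab t)) :=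
    hf.comp_continuous (f := fun p : X × ℝ ↦ (p.1, (Set.projIcc a b hab p.2 : ℝ)))
      (by fun_prop) fun p ↦ ⟨trivial, (Set.projIcc a b hab p.2).2⟩
  refine (intervalIntegral.continuous_parametric_intervalIntegral_of_continuous' hclamp a b).congr
    fun x ↦ intervalIntegral.integral_congr fun t ht ↦ ?_
  rw [Set.uIcc_of_le hab] at ht
  simp only [Set.projIcc_of_mem hab ht]

lemma continuousOn_logDeriv {f : ℝ → ℂ} (hf : ContDiff ℝ 1 f) {s : Set ℝ}
    (hs : ∀ t ∈ s, f t ≠ 0) : ContinuousOn (logDeriv f) s :=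
  (hf.continuous_deriv le_rfl).continuousOn.div hf.continuous.continuousOn hs

lemma exp_integral_logDeriv {f : ℝ → ℂ} (hf : ContDiff ℝ 1 f) {a b : ℝ} (hab : a ≤ b)
    (hne : ∀ t ∈ Set.Icc a b, f t ≠ 0) :
    Complex.exp (∫ t in a..b, logDeriv f t) = f b / f a := by
  have hcont := continuousOn_logDeriv hf hne
  have hint : IntervalIntegrable (logDeriv f) volume a b :=
    hcont.intervalIntegrable_of_Icc hab
  let h : ℝ → ℂ := fun t ↦ f t * Complex.exp (-∫ u in a..t, logDeriv f u)
  have hexp : ∀ t ∈ Set.Ioo a b, HasDerivAt h 0 t := fun t ht ↦ by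
    have ht' := Set.Ioo_subset_Icc_self ht
    have hprim : HasDerivAt (fun t ↦ ∫ u in a..t, logDeriv f u) (logDeriv f t) t :=
      intervalIntegral.integral_hasDerivAt_right
        (hint.mono_set (Set.uIcc_subset_uIcc_left (Set.Icc_subset_uIcc ht')))
        (((measurable_deriv f).div hf.continuous.measurable).stronglyMeasurable
          |>.stronglyMeasurableAtFilter)
        (hcont.continuousAt (Icc_mem_nhds ht.1 ht.2))
    have hd := (hf.differentiable one_ne_zero t).hasDerivAt.mul hprim.neg.cexp
    refine hd.congr_deriv ?_
    have := hne t ht'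
    rw [logDeriv_apply]
    field_simp
    ring
  have hhcont : ContinuousOn h (Set.Icc a b) := by
    have := intervalIntegral.continuousOn_primitive_interval' hint Set.left_mem_uIcc
    rw [Set.uIcc_of_le hab] at this
    exact hf.continuous.continuousOn.mul this.neg.cexp
  have hconst := intervalIntegral.integral_eq_sub_of_hasDerivAt_of_le hab hhcont hexp
    intervalIntegrable_const
  rw [intervalIntegral.integral_zero, eq_comm, sub_eq_zero] at hconst
  rw [eq_div_iff (hne a (Set.left_mem_Icc.2 hab))]
  simpa [h, Complex.exp_neg, ← div_eq_mul_inv, div_eq_iff, eq_div_iff, Complex.exp_ne_zero,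
    mul_comm] using hconst.symm

lemma periodic_deriv {f : ℝ → E} {c : ℝ} (hf : Function.Periodic f c) :
    Function.Periodic (deriv f) c := fun t ↦ by
  rw [← deriv_comp_add_const, funext hf]

lemma intervalIntegral_eq_of_periodic {f : ℝ → E} {L : ℝ} (hf : Function.Periodic f L) (s : ℝ) :
    ∫ t in 0..L, f t = ∫ t in (s - L / 2)..(s + L / 2), f t := by
  have := hf.intervalIntegral_add_eq 0 (s - L / 2)
  rwa [zero_add, show s - L / 2 + L = s + L / 2 by ring] at this

lemma sub_mem_Icc_neg {s t r : ℝ} (ht : t ∈ Set.Icc (s - r) (s + r)) :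
    t - s ∈ Set.Icc (-r) r :=
  ⟨by linarith [ht.1], by linarith [ht.2]⟩

lemma eq_of_cexp_comp_eq {X : Type*} [TopologicalSpace X] [PreconnectedSpace X] {f : X → ℂ}
    (hf : Continuous f) (hexp : ∀ x y, Complex.exp (f x) = Complex.exp (f y)) (x y : X) :
    f x = f y :=
  Complex.isCoveringMap_exp.const_of_comp hf (fun x y ↦ Subtype.ext (hexp x y)) x y

lemma mem_slitPlane_of_re_nonneg {z : ℂ} (hre : 0 ≤ z.re) (hz : z ≠ 0) :
    z ∈ Complex.slitPlane := by
  rcases hre.lt_or_eq with h | h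
  · exact .inl h
  · exact .inr fun him ↦ hz (Complex.ext h.symm him)

lemma integral_logDeriv_eq_log_sub_log {f : ℝ → ℂ} {a b : ℝ} (hab : a ≤ b)
    (hf : ∀ t ∈ Set.Icc a b, DifferentiableAt ℝ f t) (hne : ∀ t ∈ Set.Icc a b, f t ≠ 0)
    (hre : ∀ t ∈ Set.Icc a b, 0 ≤ (f t).re) (hint : IntervalIntegrable (logDeriv f) volume a b) :
    ∫ t in a..b, logDeriv f t = Complex.log (f b) - Complex.log (f a) := by
  refine intervalIntegral.integral_eq_sub_of_hasDerivAt (f := fun t ↦ Complex.log (f t))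
    (fun t ht ↦ ?_) hint
  rw [Set.uIcc_of_le hab] at ht
  exact (hf t ht).hasDerivAt.clog_real (mem_slitPlane_of_re_nonneg (hre t ht) (hne t ht))

lemma mul_re_nonneg_of_norm_sub_le {q : ℂ} {u : ℝ} (h : ‖q - u‖ ≤ ‖q‖) : 0 ≤ u * q.re := by
  have hsq := pow_le_pow_left₀ (norm_nonneg _) h 2
  simp only [← Complex.normSq_eq_norm_sq, Complex.normSq_apply, Complex.sub_re, Complex.sub_im,
    Complex.ofReal_re, Complex.ofReal_im] at hsq
  nlinarith

lemma nonneg_of_mul_nonneg_on_Icc {g : ℝ → ℝ} {r : ℝ} (hr : 0 < r)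
    (hg : ContinuousOn g (Set.Icc 0 r)) (h : ∀ u ∈ Set.Icc 0 r, 0 ≤ u * g u) :
    ∀ u ∈ Set.Icc 0 r, 0 ≤ g u := by
  have hmaps : Set.MapsTo g (Set.Ioc 0 r) (Set.Ici 0) := fun u hu ↦
    nonneg_of_mul_nonneg_right (h u (Set.Ioc_subset_Icc_self hu)) hu.1
  rw [← closure_Ioc hr.ne] at hg ⊢
  exact fun u hu ↦ isClosed_Ici.closure_subset (hmaps.closure_of_continuousOn hg hu)

lemma abs_im_integral_logDeriv_le_pi {f : ℝ → ℂ} {r : ℝ} (hr : 0 < r)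
    (hdiff : ∀ u ∈ Set.Icc (-r) r, DifferentiableAt ℝ f u)
    (hne : ∀ u ∈ Set.Icc (-r) r, f u ≠ 0)
    (hre : ∀ u ∈ Set.Icc (-r) r, 0 ≤ u * (f u).re) (hodd : f (-r) = -f r)
    (hint : IntervalIntegrable (logDeriv f) volume (-r) r) :
    |(∫ u in -r..r, logDeriv f u).im| ≤ π := by
  have hsub_right : ∀ u ∈ Set.Icc 0 r, u ∈ Set.Icc (-r) r := fun u hu ↦
    ⟨by linarith [hu.1], hu.2⟩
  have hsub_left : ∀ u ∈ Set.Icc (-r) 0, u ∈ Set.Icc (-r) r := fun u hu ↦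
    ⟨hu.1, by linarith [hu.2]⟩
  have hcont : ContinuousOn (fun u ↦ (f u).re) (Set.Icc (-r) r) := fun u hu ↦
    (Complex.continuous_re.continuousAt.comp (hdiff u hu).continuousAt).continuousWithinAt
  have hright : ∀ u ∈ Set.Icc 0 r, 0 ≤ (f u).re :=
    nonneg_of_mul_nonneg_on_Icc hr (hcont.mono hsub_right) fun u hu ↦ hre u (hsub_right u hu)
  have hleft : ∀ u ∈ Set.Icc (-r) 0, 0 ≤ (-f u).re := fun u hu ↦ by
    simpa using nonneg_of_mul_nonneg_on_Icc (g := fun u ↦ -(f (-u)).re) hr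
      (hcont.comp continuousOn_neg fun u hu ↦ ⟨by linarith [hu.2], by linarith [hu.1]⟩).neg
      (fun u hu ↦ by simpa using hre (-u) ⟨by linarith [hu.2], by linarith [hu.1]⟩)
      (-u) ⟨by linarith [hu.2], by linarith [hu.1]⟩
  have h0 : (0 : ℝ) ∈ Set.uIcc (-r) r := Set.mem_uIcc_of_le (by linarith) hr.le
  have hint_left := hint.mono_set (Set.uIcc_subset_uIcc_left h0)
  have hint_right := hint.mono_set (Set.uIcc_subset_uIcc_right h0)
  have hlog_right := integral_logDeriv_eq_log_sub_log hr.le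
    (fun u hu ↦ hdiff u (hsub_right u hu)) (fun u hu ↦ hne u (hsub_right u hu)) hright hint_right
  have hneg : logDeriv (-f) = logDeriv f := funext fun u ↦ by simp [logDeriv_apply]
  have hlog_left := integral_logDeriv_eq_log_sub_log (f := -f) (neg_nonpos.2 hr.le)
    (fun u hu ↦ (hdiff u (hsub_left u hu)).neg) (fun u hu ↦ neg_ne_zero.2 (hne u (hsub_left u hu)))
    hleft (hneg ▸ hint_left)
  rw [hneg, Pi.neg_apply, Pi.neg_apply, hodd, neg_neg] at hlog_left
  have hsum : (∫ u in -r..r, logDeriv f u).im = (-f 0).arg - (f 0).arg := by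
    rw [← intervalIntegral.integral_add_adjacent_intervals hint_left hint_right, hlog_left,
      hlog_right]
    simp only [Complex.add_im, Complex.sub_im, Complex.log_im]
    ring
  have harg : |(f 0).arg| ≤ π / 2 :=
    Complex.abs_arg_le_pi_div_two_iff.2 (hright 0 (Set.left_mem_Icc.2 hr.le))
  have harg_neg : |(-f 0).arg| ≤ π / 2 :=
    Complex.abs_arg_le_pi_div_two_iff.2 (hleft 0 (Set.right_mem_Icc.2 (neg_nonpos.2 hr.le)))
  rw [hsum]
  exact (abs_sub _ _).trans (by linarith)

end Calculus

section PrincipalValue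

variable {E F : Type*} [NormedAddCommGroup E] [NormedSpace ℝ E]
  [NormedAddCommGroup F] [NormedSpace ℝ F] {K : Set ℝ} {c : ℝ} {f g : ℝ → E} {v w : E}

/-- The part of `K` at distance at least `ε` from `c`, over which a Cauchy principal value
at `c` is approximated. -/
def truncation (K : Set ℝ) (c ε : ℝ) : Set ℝ := {t | t ∈ K ∧ ε ≤ |t - c|}

/-- `v` is the Cauchy principal value of `∫ t in K, f t` at the point `c`. Integrability of the
truncations is part of the notion, so that the approximating integrals are not junk values. -/
structure HasPrincipalValue (K : Set ℝ) (c : ℝ) (f : ℝ → E) (v : E) : Prop where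
  integrableOn : ∀ ε > 0, IntegrableOn f (truncation K c ε)
  tendsto : Tendsto (fun ε ↦ ∫ t in truncation K c ε, f t) (𝓝[>] 0) (𝓝 v)

lemma truncation_eq (K : Set ℝ) (c ε : ℝ) : truncation K c ε = {t | ε ≤ |t - c|} ∩ K := by
  rw [Set.inter_comm]
  rfl

lemma isClosed_le_abs_sub (c ε : ℝ) : IsClosed {t : ℝ | ε ≤ |t - c|} :=
  isClosed_le continuous_const (by fun_prop)

lemma measurableSet_le_abs_sub (c ε : ℝ) : MeasurableSet {t : ℝ | ε ≤ |t - c|} :=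
  (isClosed_le_abs_sub c ε).measurableSet

lemma measurableSet_truncation (hK : MeasurableSet K) (c ε : ℝ) :
    MeasurableSet (truncation K c ε) := hK.inter (measurableSet_le_abs_sub c ε)

lemma HasPrincipalValue.of_integrableOn (hf : IntegrableOn f K) (c : ℝ) :
    HasPrincipalValue K c f (∫ t in K, f t) := by
  refine ⟨fun ε _ ↦ hf.mono_set fun t ht ↦ ht.1, ?_⟩
  have hcover : AECover (volume.restrict K) (𝓝[>] (0 : ℝ)) fun ε ↦ {t | ε ≤ |t - c|} := by
    refine ⟨?_, fun ε ↦ measurableSet_le_abs_sub c ε⟩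
    filter_upwards [ae_restrict_of_ae (Measure.ae_ne volume c)] with t ht
    filter_upwards [Ioo_mem_nhdsGT (abs_pos.2 (sub_ne_zero.2 ht))] with ε hε
    exact hε.2.le
  simpa only [Measure.restrict_restrict (measurableSet_le_abs_sub c _), ← truncation_eq]
    using hcover.integral_tendsto_of_countably_generated hf

lemma HasPrincipalValue.of_periodic {L : ℝ} (hL : 0 ≤ L) (hf : Function.Periodic f L) {s : ℝ}
    (hint : IntegrableOn f (Set.Icc (s - L / 2) (s + L / 2))) :
    HasPrincipalValue (Set.Icc (s - L / 2) (s + L / 2)) s f (∫ t in 0..L, f t) := by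
  rw [intervalIntegral_eq_of_periodic hf s, intervalIntegral.integral_of_le (by linarith),
    ← integral_Icc_eq_integral_Ioc]
  exact .of_integrableOn hint s

lemma HasPrincipalValue.add (hf : HasPrincipalValue K c f v) (hg : HasPrincipalValue K c g w) :
    HasPrincipalValue K c (fun t ↦ f t + g t) (v + w) where
  integrableOn ε hε := (hf.integrableOn ε hε).add (hg.integrableOn ε hε)
  tendsto := (hf.tendsto.add hg.tendsto).congr' <| by
    filter_upwards [self_mem_nhdsWithin] with ε hε
    exact (integral_add (hf.integrableOn ε hε) (hg.integrableOn ε hε)).symm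

lemma HasPrincipalValue.clm_comp [CompleteSpace E] [CompleteSpace F]
    (hf : HasPrincipalValue K c f v) (T : E →L[ℝ] F) :
    HasPrincipalValue K c (fun t ↦ T (f t)) (T v) where
  integrableOn ε hε := T.integrable_comp (hf.integrableOn ε hε)
  tendsto := ((T.continuous.tendsto v).comp hf.tendsto).congr' <| by
    filter_upwards [self_mem_nhdsWithin] with ε hε
    exact (T.integral_comp_comm (hf.integrableOn ε hε)).symm

lemma HasPrincipalValue.sub (hf : HasPrincipalValue K c f v) (hg : HasPrincipalValue K c g w) :
    HasPrincipalValue K c (fun t ↦ f t - g t) (v - w) where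
  integrableOn ε hε := (hf.integrableOn ε hε).sub (hg.integrableOn ε hε)
  tendsto := (hf.tendsto.sub hg.tendsto).congr' <| by
    filter_upwards [self_mem_nhdsWithin] with ε hε
    exact (integral_sub (hf.integrableOn ε hε) (hg.integrableOn ε hε)).symm

lemma HasPrincipalValue.congr (hK : MeasurableSet K) (hf : HasPrincipalValue K c f v)
    (hfg : ∀ t ∈ K, t ≠ c → f t = g t) : HasPrincipalValue K c g v := by
  have heqOn : ∀ ε > 0, Set.EqOn f g (truncation K c ε) := fun ε hε t ht ↦
    hfg t ht.1 (sub_ne_zero.1 (abs_pos.1 (hε.trans_le ht.2)))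
  refine ⟨fun ε hε ↦ (hf.integrableOn ε hε).congr_fun (heqOn ε hε)
    (measurableSet_truncation hK c ε), hf.tendsto.congr' ?_⟩
  filter_upwards [self_mem_nhdsWithin] with ε hε
  exact setIntegral_congr_fun (measurableSet_truncation hK c ε) (heqOn ε hε)

lemma setIntegral_eq_zero_of_odd {s : Set ℝ} (hs : ∀ t, 2 * c - t ∈ s ↔ t ∈ s)
    (hf : ∀ t, f (2 * c - t) = -f t) : ∫ t in s, f t = 0 := by
  have hreflect := (volume.measurePreserving_sub_left (2 * c)).setIntegral_preimage_emb
    (MeasurableEquiv.subLeft (2 * c)).measurableEmbedding f s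
  simp only [hf, integral_neg, show (2 * c - ·) ⁻¹' s = s from Set.ext hs] at hreflect
  have := IsAddTorsionFree.of_isTorsionFree ℝ E
  exact self_eq_neg.1 hreflect.symm

lemma hasPrincipalValue_inv_sub (c r : ℝ) :
    HasPrincipalValue (Set.Icc (c - r) (c + r)) c (fun t ↦ ((t - c : ℝ) : ℂ)⁻¹) 0 := by
  constructor
  · intro ε hε
    have hcompact : IsCompact (truncation (Set.Icc (c - r) (c + r)) c ε) :=
      isCompact_Icc.inter_right (isClosed_le_abs_sub c ε)
    refine ContinuousOn.integrableOn_compact hcompact (ContinuousOn.inv₀ (by fun_prop) ?_)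
    intro t ht
    exact Complex.ofReal_ne_zero.2 (abs_pos.1 (hε.trans_le ht.2))
  · refine tendsto_const_nhds.congr fun ε ↦ (setIntegral_eq_zero_of_odd (c := c) ?_ ?_).symm
    · intro t
      have : |2 * c - t - c| = |t - c| := by rw [abs_sub_comm]; ring_nf
      simp only [truncation, Set.mem_ofPred_eq, Set.mem_Icc, this]
      constructor <;> rintro ⟨⟨h₁, h₂⟩, h₃⟩ <;> exact ⟨⟨by linarith, by linarith⟩, h₃⟩
    · intro t
      rw [← inv_neg, ← Complex.ofReal_neg]
      ring_nf

end PrincipalValue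

section ChordSlope

variable {E : Type*} [NormedAddCommGroup E] [NormedSpace ℝ E]

/-- The slope of the chord of `l` from parameter `s` to parameter `s + u`, written as the mean of
`deriv l` over the chord so that it extends continuously to `u = 0`. -/
noncomputable def chordSlope (l : ℝ → E) (s u : ℝ) : E := ∫ θ in (0 : ℝ)..1, deriv l (s + θ * u)

variable {l : ℝ → E}

lemma continuous_uncurry_chordSlope (hl : ContDiff ℝ 1 l) :
    Continuous (Function.uncurry (chordSlope l)) := by
  have : Continuous (deriv l) := hl.continuous_deriv le_rfl
  exact intervalIntegral.continuous_parametric_intervalIntegral_of_continuous'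
    (f := fun (p : ℝ × ℝ) θ ↦ deriv l (p.1 + θ * p.2)) (by fun_prop) 0 1

lemma smul_chordSlope [CompleteSpace E] (hl : ContDiff ℝ 1 l) (s u : ℝ) :
    u • chordSlope l s u = l (s + u) - l s := by
  have hcov := intervalIntegral.smul_integral_comp_add_mul (a := 0) (b := 1) (deriv l) u s
  simp only [mul_comm u, zero_mul, one_mul, add_zero] at hcov
  rw [chordSlope, hcov]
  exact intervalIntegral.integral_deriv_eq_sub (fun t _ ↦ hl.differentiable one_ne_zero t)
    ((hl.continuous_deriv le_rfl).intervalIntegrable _ _)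

lemma hasDerivAt_chordSlope (hl : ContDiff ℝ 2 l) (s u : ℝ) :
    HasDerivAt (chordSlope l s)
      (∫ θ in (0 : ℝ)..1, θ • deriv (deriv l) (s + θ * u)) u := by
  have hl' : ContDiff ℝ 1 (deriv l) := hl.deriv'
  have : Continuous (deriv (deriv l)) := hl'.continuous_deriv le_rfl
  refine hasDerivAt_integral_of_continuous_deriv (F := fun u θ ↦ deriv l (s + θ * u))
    (F' := fun u θ ↦ θ • deriv (deriv l) (s + θ * u)) 0 1 u
    (fun u ↦ by fun_prop) (by fun_prop) fun u θ ↦ ?_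
  exact ((hl'.differentiable one_ne_zero _).hasDerivAt).scomp u
    (((hasDerivAt_id u).const_mul θ).const_add s |>.congr_deriv (mul_one θ))

lemma continuous_uncurry_deriv_chordSlope (hl : ContDiff ℝ 2 l) :
    Continuous (Function.uncurry fun s ↦ deriv (chordSlope l s)) := by
  have hl' : ContDiff ℝ 1 (deriv l) := hl.deriv'
  have : Continuous (deriv (deriv l)) := hl'.continuous_deriv le_rfl
  simp only [fun s ↦ funext fun u ↦ (hasDerivAt_chordSlope hl s u).deriv]
  exact intervalIntegral.continuous_parametric_intervalIntegral_of_continuous'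
    (f := fun (p : ℝ × ℝ) (θ : ℝ) ↦ θ • deriv (deriv l) (p.1 + θ * p.2)) (by fun_prop) 0 1

lemma contDiff_chordSlope (hl : ContDiff ℝ 2 l) (s : ℝ) : ContDiff ℝ 1 (chordSlope l s) :=
  contDiff_one_iff_deriv.2 ⟨fun u ↦ (hasDerivAt_chordSlope hl s u).differentiableAt,
    (continuous_uncurry_deriv_chordSlope hl).uncurry_left s⟩

lemma mul_re_sub_div_chordSlope_nonneg {l : ℝ → ℂ} (hl : ContDiff ℝ 1 l) {s u : ℝ} {z : ℂ}
    (hne : chordSlope l s u ≠ 0) (hle : ‖l s - z‖ ≤ ‖l (s + u) - z‖) :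
    0 ≤ u * ((l (s + u) - z) / chordSlope l s u).re := by
  refine mul_re_nonneg_of_norm_sub_le ?_
  have hchord := smul_chordSlope hl s u
  rw [Complex.real_smul] at hchord
  rw [div_sub' hne, mul_comm _ (u : ℂ), hchord, norm_div, norm_div, sub_sub_sub_cancel_left]
  gcongr

end ChordSlope

/-- `l` is an `L`-periodic `C²` parametrization, with nowhere vanishing velocity, of a closed
curve without self-intersections. -/
structure IsRegularSimpleClosed {E : Type*} [NormedAddCommGroup E] [NormedSpace ℝ E] (L : ℝ)
    (l : ℝ → E) : Prop where
  pos : 0 < L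
  contDiff : ContDiff ℝ 2 l
  periodic : Function.Periodic l L
  deriv_ne_zero : ∀ s, deriv l s ≠ 0
  injOn : Set.InjOn l (Set.Ico 0 L)

namespace IsRegularSimpleClosed

section Parametrization

variable {E : Type*} [NormedAddCommGroup E] [NormedSpace ℝ E] {L : ℝ} {l : ℝ → E}

lemma contDiff_one (h : IsRegularSimpleClosed L l) : ContDiff ℝ 1 l :=
  h.contDiff.of_le one_le_two

lemma eq_zero_of_apply_add_eq (h : IsRegularSimpleClosed L l) {s u : ℝ} (hu : |u| < L)
    (heq : l (s + u) = l s) : u = 0 := by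
  have hmod (t : ℝ) : l (toIcoMod h.pos 0 t) = l t := h.periodic.sub_zsmul_eq _
  obtain ⟨n, hn⟩ := (toIcoMod_eq_toIcoMod h.pos).1 (h.injOn (toIcoMod_mem_Ico' h.pos s)
    (toIcoMod_mem_Ico' h.pos (s + u)) (by rw [hmod, hmod, heq]))
  rw [add_sub_cancel_left, zsmul_eq_mul] at hn
  have hn_lt : |n| < 1 := by
    rw [hn, abs_mul, abs_of_pos h.pos] at hu
    exact_mod_cast lt_of_mul_lt_mul_right (hu.trans_eq (one_mul L).symm) h.pos.le
  rw [hn, Int.abs_lt_one_iff.1 hn_lt, Int.cast_zero, zero_mul]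

lemma apply_ne_apply (h : IsRegularSimpleClosed L l) {s t : ℝ} (hlt : |t - s| < L)
    (hne : t ≠ s) : l s ≠ l t := fun heq ↦
  hne (sub_eq_zero.1 (h.eq_zero_of_apply_add_eq (s := s) hlt (by rw [add_sub_cancel, heq])))

lemma chordSlope_ne_zero [CompleteSpace E] (h : IsRegularSimpleClosed L l) (s : ℝ) {u : ℝ}
    (hu : |u| < L) : chordSlope l s u ≠ 0 := by
  rcases eq_or_ne u 0 with rfl | hu0
  · simpa [chordSlope] using h.deriv_ne_zero s
  · intro hzero
    refine hu0 (h.eq_zero_of_apply_add_eq (s := s) hu (sub_eq_zero.1 ?_))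
    rw [← smul_chordSlope h.contDiff_one, hzero, smul_zero]

lemma apply_add_neg_half (h : IsRegularSimpleClosed L l) (s : ℝ) :
    l (s + -(L / 2)) = l (s + L / 2) := by
  rw [← h.periodic]
  ring_nf

lemma chordSlope_neg_half [CompleteSpace E] (h : IsRegularSimpleClosed L l) (s : ℝ) :
    chordSlope l s (-(L / 2)) = -chordSlope l s (L / 2) := by
  refine smul_right_injective E (half_pos h.pos).ne' (?_ : (L / 2) • _ = (L / 2) • _)
  rw [smul_neg, smul_chordSlope h.contDiff_one, ← h.apply_add_neg_half,
    ← smul_chordSlope h.contDiff_one, neg_smul, neg_neg]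

lemma abs_lt_of_mem_Icc (h : IsRegularSimpleClosed L l) {u : ℝ}
    (hu : u ∈ Set.Icc (-(L / 2)) (L / 2)) : |u| < L :=
  (abs_le.2 hu).trans_lt (half_lt_self h.pos)

lemma exists_forall_norm_sub_le (h : IsRegularSimpleClosed L l) (z : E) :
    ∃ s, ∀ t, ‖l s - z‖ ≤ ‖l t - z‖ := by
  have hper : Function.Periodic (fun t ↦ ‖l t - z‖) L := fun t ↦ by simp only [h.periodic t]
  have hcont : Continuous fun t ↦ ‖l t - z‖ := (h.contDiff.continuous.sub continuous_const).norm
  obtain ⟨_, ⟨s, rfl⟩, hs⟩ := (hper.compact_of_continuous h.pos.ne' hcont).exists_isLeast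
    (Set.range_nonempty _)
  exact ⟨s, fun t ↦ hs ⟨t, rfl⟩⟩

end Parametrization

end IsRegularSimpleClosed

/-- The total variation of the logarithm of the chord slope at `l s` along one period: the
principal value of the Cauchy integral `∫ deriv l t / (l t - l s)`. -/
noncomputable def chordVariation (l : ℝ → ℂ) (L s : ℝ) : ℂ :=
  ∫ u in -(L / 2)..L / 2, logDeriv (chordSlope l s) u

namespace IsRegularSimpleClosed

variable {L : ℝ} {l : ℝ → ℂ}

lemma continuousOn_logDeriv_chordSlope (h : IsRegularSimpleClosed L l) (s : ℝ) :
    ContinuousOn (logDeriv (chordSlope l s)) (Set.Icc (-(L / 2)) (L / 2)) :=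
  continuousOn_logDeriv (contDiff_chordSlope h.contDiff s) fun _ hu ↦
    h.chordSlope_ne_zero s (h.abs_lt_of_mem_Icc hu)

lemma continuousOn_logDeriv_chordSlope_sub (h : IsRegularSimpleClosed L l) (s : ℝ) :
    ContinuousOn (fun t ↦ logDeriv (chordSlope l s) (t - s))
      (Set.Icc (s - L / 2) (s + L / 2)) :=
  (h.continuousOn_logDeriv_chordSlope s).comp (by fun_prop) fun _ ht ↦ sub_mem_Icc_neg ht

lemma cexp_chordVariation (h : IsRegularSimpleClosed L l) (s : ℝ) :
    Complex.exp (chordVariation l L s) = -1 := by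
  have hmem : L / 2 ∈ Set.Icc (-(L / 2)) (L / 2) := ⟨by linarith [h.pos], le_rfl⟩
  rw [chordVariation, exp_integral_logDeriv (contDiff_chordSlope h.contDiff s)
    (by linarith [h.pos]) fun u hu ↦ h.chordSlope_ne_zero s (h.abs_lt_of_mem_Icc hu),
    h.chordSlope_neg_half, div_neg,
    div_self (h.chordSlope_ne_zero s (h.abs_lt_of_mem_Icc hmem))]

lemma continuous_chordVariation (h : IsRegularSimpleClosed L l) :
    Continuous (chordVariation l L) := by
  refine continuous_intervalIntegral_of_continuousOn (by linarith [h.pos]) ?_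
  exact (continuous_uncurry_deriv_chordSlope h.contDiff).continuousOn.div
    (continuous_uncurry_chordSlope h.contDiff_one).continuousOn fun p hp ↦
      h.chordSlope_ne_zero p.1 (h.abs_lt_of_mem_Icc hp.2)

lemma chordVariation_eq_chordVariation (h : IsRegularSimpleClosed L l) (s t : ℝ) :
    chordVariation l L s = chordVariation l L t :=
  eq_of_cexp_comp_eq h.continuous_chordVariation
    (fun s t ↦ by rw [h.cexp_chordVariation, h.cexp_chordVariation]) s t

lemma periodic_deriv_div_sub (h : IsRegularSimpleClosed L l) (z : ℂ) :
    Function.Periodic (fun t ↦ deriv l t / (l t - z)) L := fun t ↦ by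
  simp only [h.periodic t, periodic_deriv h.periodic t]

lemma integral_div_sub_eq_integral_logDeriv (h : IsRegularSimpleClosed L l) (z : ℂ) (s : ℝ) :
    ∫ t in 0..L, deriv l t / (l t - z) =
      ∫ u in -(L / 2)..L / 2, logDeriv (fun u ↦ l (s + u) - z) u := by
  rw [intervalIntegral_eq_of_periodic (h.periodic_deriv_div_sub z) s, sub_eq_add_neg,
    ← intervalIntegral.integral_comp_add_left (fun t ↦ deriv l t / (l t - z)) s]
  simp only [logDeriv_apply, deriv_sub_const, deriv_comp_const_add]

lemma abs_im_integral_sub_im_chordVariation_le_pi (h : IsRegularSimpleClosed L l) {z : ℂ}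
    (hz : ∀ t, l t ≠ z) (s : ℝ) :
    |(∫ t in 0..L, deriv l t / (l t - z)).im - (chordVariation l L s).im| ≤ π := by
  obtain ⟨s', hs'⟩ := h.exists_forall_norm_sub_le z
  rw [h.chordVariation_eq_chordVariation s s', h.integral_div_sub_eq_integral_logDeriv z s']
  have hle : -(L / 2) ≤ L / 2 := by linarith [h.pos]
  set D := chordSlope l s'
  let N : ℝ → ℂ := fun u ↦ l (s' + u) - z
  have hNne (u : ℝ) : N u ≠ 0 := sub_ne_zero.2 (hz _)
  have hDne : ∀ u ∈ Set.Icc (-(L / 2)) (L / 2), D u ≠ 0 := fun u hu ↦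
    h.chordSlope_ne_zero s' (h.abs_lt_of_mem_Icc hu)
  have hN : ContDiff ℝ 1 N :=
    (h.contDiff_one.comp (contDiff_const.add contDiff_id)).sub contDiff_const
  have hD : ContDiff ℝ 1 D := contDiff_chordSlope h.contDiff s'
  have hNdiff : Differentiable ℝ N := hN.differentiable one_ne_zero
  have hDdiff : Differentiable ℝ D := hD.differentiable one_ne_zero
  have hintN : IntervalIntegrable (logDeriv N) volume (-(L / 2)) (L / 2) :=
    (continuousOn_logDeriv hN fun u _ ↦ hNne u).intervalIntegrable_of_Icc hle
  have hintD : IntervalIntegrable (logDeriv D) volume (-(L / 2)) (L / 2) :=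
    (h.continuousOn_logDeriv_chordSlope s').intervalIntegrable_of_Icc hle
  have hlogDeriv : Set.EqOn (fun u ↦ logDeriv N u - logDeriv D u) (logDeriv fun u ↦ N u / D u)
      (Set.uIcc (-(L / 2)) (L / 2)) := fun u hu ↦
    (logDeriv_div u (hNne u) (hDne u (Set.uIcc_of_le hle ▸ hu)) (hNdiff u) (hDdiff u)).symm
  rw [← Complex.sub_im, chordVariation, ← intervalIntegral.integral_sub hintN hintD,
    intervalIntegral.integral_congr hlogDeriv]
  refine abs_im_integral_logDeriv_le_pi (half_pos h.pos)
    (fun u hu ↦ (hNdiff u).div (hDdiff u) (hDne u hu))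
    (fun u hu ↦ div_ne_zero (hNne u) (hDne u hu))
    (fun u hu ↦ mul_re_sub_div_chordSlope_nonneg h.contDiff_one (hDne u hu) (hs' _)) ?_
    ((hintN.sub hintD).congr (hlogDeriv.mono Set.uIoc_subset_uIcc))
  rw [show N (-(L / 2)) = N (L / 2) by simp only [N, h.apply_add_neg_half],
    show D (-(L / 2)) = -D (L / 2) from h.chordSlope_neg_half s', div_neg]

lemma chordVariation_eq_pi_mul_I (h : IsRegularSimpleClosed L l) {z x : ℂ}
    (hz : ∀ t, l t ≠ z) (hwind_z : ∫ t in 0..L, deriv l t / (l t - z) = 2 * (π : ℂ) * Complex.I)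
    (hx : ∀ t, l t ≠ x) (hwind_x : ∫ t in 0..L, deriv l t / (l t - x) = 0) (s : ℝ) :
    chordVariation l L s = π * Complex.I := by
  have hnorm := congrArg norm (h.cexp_chordVariation s)
  rw [Complex.norm_exp, norm_neg, norm_one, Real.exp_eq_one_iff] at hnorm
  have hinner := abs_le.1 (h.abs_im_integral_sub_im_chordVariation_le_pi hz s)
  have houter := abs_le.1 (h.abs_im_integral_sub_im_chordVariation_le_pi hx s)
  simp only [hwind_z, hwind_x, Complex.mul_im, Complex.mul_re, Complex.re_ofNat, Complex.im_ofNat,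
    Complex.ofReal_re, Complex.ofReal_im, Complex.I_re, Complex.I_im, Complex.zero_im]
    at hinner houter
  apply Complex.ext
  · simpa using hnorm
  · simp only [Complex.mul_im, Complex.ofReal_re, Complex.ofReal_im, Complex.I_re, Complex.I_im]
    linarith [hinner.1, houter.1]

lemma deriv_div_sub_eq (h : IsRegularSimpleClosed L l) {s t : ℝ} (hlt : |t - s| < L)
    (hne : t ≠ s) :
    deriv l t / (l t - l s) = ((t - s : ℝ) : ℂ)⁻¹ + logDeriv (chordSlope l s) (t - s) := by
  obtain ⟨u, rfl⟩ : ∃ u, t = s + u := ⟨t - s, by ring⟩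
  rw [add_sub_cancel_left] at hlt ⊢
  have hu : (u : ℂ) ≠ 0 := by simpa using hne
  have hD : DifferentiableAt ℝ (chordSlope l s) u :=
    (hasDerivAt_chordSlope h.contDiff s u).differentiableAt
  have hchord : (fun v ↦ l (s + v) - l s) = fun v : ℝ ↦ (v : ℂ) * chordSlope l s v :=
    funext fun v ↦ by rw [← smul_chordSlope h.contDiff_one, Complex.real_smul]
  have hofReal : HasDerivAt (fun v : ℝ ↦ (v : ℂ)) 1 u := by
    simpa using (hasDerivAt_id u).ofReal_comp
  have hlog := logDeriv_mul u hu (h.chordSlope_ne_zero s hlt) hofReal.differentiableAt hD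
  rwa [← hchord, logDeriv_apply, deriv_sub_const, deriv_comp_const_add, logDeriv_apply,
    hofReal.deriv, one_div] at hlog

lemma hasPrincipalValue_deriv_div_sub (h : IsRegularSimpleClosed L l) (s : ℝ) :
    HasPrincipalValue (Set.Icc (s - L / 2) (s + L / 2)) s (fun t ↦ deriv l t / (l t - l s))
      (chordVariation l L s) := by
  have hvalue : ∫ t in Set.Icc (s - L / 2) (s + L / 2), logDeriv (chordSlope l s) (t - s) =
      chordVariation l L s := by
    rw [integral_Icc_eq_integral_Ioc, ← intervalIntegral.integral_of_le (by linarith [h.pos]),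
      intervalIntegral.integral_comp_sub_right (logDeriv (chordSlope l s)), sub_sub_cancel_left,
      add_sub_cancel_left, chordVariation]
  have hpv := (hasPrincipalValue_inv_sub s (L / 2)).add
    (.of_integrableOn (h.continuousOn_logDeriv_chordSlope_sub s).integrableOn_Icc s)
  rw [zero_add, hvalue] at hpv
  exact hpv.congr measurableSet_Icc fun t ht hts ↦
    (h.deriv_div_sub_eq (h.abs_lt_of_mem_Icc (sub_mem_Icc_neg ht)) hts).symm

end IsRegularSimpleClosed

section VortexIdentity

open scoped ComplexConjugate

lemma div_norm_sq_eq_conj_inv (z : ℂ) : z / (‖z‖ : ℂ) ^ 2 = conj z⁻¹ := by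
  rw [← Complex.conj_mul', map_inv₀]
  rcases eq_or_ne z 0 with rfl | hz
  · simp
  · have : conj z ≠ 0 := (map_ne_zero _).2 hz
    field_simp

lemma dotR_div_norm_sq (a b : ℂ) : dotR a b / ‖a‖ ^ 2 = (b / a).re := by
  rw [dotR, Complex.div_re, Complex.normSq_eq_norm_sq]
  ring

lemma dotR_neg_I_mul_div_norm_sq (a b : ℂ) :
    dotR a (-Complex.I * b) / ‖a‖ ^ 2 = (b / a).im := by
  rw [dotR_div_norm_sq, mul_div_assoc]
  simp

lemma Kdl_of_ne {l : ℝ → ℂ} {s t : ℝ} (hne : l s ≠ l t) :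
    Kdl l s t = (deriv l t / (l s - l t)).im := by
  rw [Kdl, if_neg hne, normalv, dotR_neg_I_mul_div_norm_sq]

lemma dotR_smul_eq_Kdl_smul_add {l : ℝ → ℂ} {s t : ℝ} {x : ℂ} (hst : l s ≠ l t)
    (hs : l s ≠ x) (ht : l t ≠ x) :
    (dotR (l s - l t) (deriv l t) / ‖l s - l t‖ ^ 2) • ((x - l t) / (‖x - l t‖ : ℂ) ^ 2) =
      Kdl l s t • (Complex.I * (x - l t) / (‖x - l t‖ : ℂ) ^ 2) +
        conj ((x - l s)⁻¹ * (deriv l t / (l t - x) - deriv l t / (l t - l s))) := by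
  set w := deriv l t / (l s - l t)
  have hpartial : (x - l s)⁻¹ * (deriv l t / (l t - x) - deriv l t / (l t - l s)) =
      w * (x - l t)⁻¹ := by
    have h₁ := sub_ne_zero.2 hst
    have h₂ := sub_ne_zero.2 hst.symm
    have h₃ := sub_ne_zero.2 hs.symm
    have h₄ := sub_ne_zero.2 ht
    have h₅ := sub_ne_zero.2 ht.symm
    simp only [w]
    field_simp
    ring
  have hconj : conj w = w.re - w.im * Complex.I := by
    apply Complex.ext <;> simp
  rw [hpartial, map_mul, hconj, Kdl_of_ne hst, dotR_div_norm_sq, mul_div_assoc,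
    div_norm_sq_eq_conj_inv, Complex.real_smul, Complex.real_smul]
  ring

namespace IsRegularSimpleClosed

variable {L : ℝ} {l : ℝ → ℂ}

lemma hasPrincipalValue_deriv_div_sub_of_notMem (h : IsRegularSimpleClosed L l) {x : ℂ}
    (hx : ∀ t, l t ≠ x) (s : ℝ) :
    HasPrincipalValue (Set.Icc (s - L / 2) (s + L / 2)) s (fun t ↦ deriv l t / (l t - x))
      (∫ t in 0..L, deriv l t / (l t - x)) := by
  have hcont : Continuous fun t ↦ deriv l t / (l t - x) :=
    (h.contDiff_one.continuous_deriv le_rfl).div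
      (h.contDiff.continuous.sub continuous_const) fun t ↦ sub_ne_zero.2 (hx t)
  exact .of_periodic h.pos.le (h.periodic_deriv_div_sub x) hcont.integrableOn_Icc

lemma Kdl_eq_neg_im_logDeriv (h : IsRegularSimpleClosed L l) {s t : ℝ} (hlt : |t - s| < L)
    (hne : t ≠ s) : Kdl l s t = -(logDeriv (chordSlope l s) (t - s)).im := by
  rw [Kdl_of_ne (h.apply_ne_apply hlt hne), ← neg_sub (l t), div_neg,
    h.deriv_div_sub_eq hlt hne, Complex.neg_im, Complex.add_im, ← Complex.ofReal_inv,
    Complex.ofReal_im, zero_add]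

lemma hasPrincipalValue_Kdl_smul (h : IsRegularSimpleClosed L l) {x : ℂ}
    (hx : ∀ t, l t ≠ x) (s : ℝ) :
    HasPrincipalValue (Set.Icc (s - L / 2) (s + L / 2)) s
      (fun t ↦ Kdl l s t • (Complex.I * (x - l t) / (‖x - l t‖ : ℂ) ^ 2))
      (∫ t in 0..L, Kdl l s t • (Complex.I * (x - l t) / (‖x - l t‖ : ℂ) ^ 2)) := by
  have hper : Function.Periodic
      (fun t ↦ Kdl l s t • (Complex.I * (x - l t) / (‖x - l t‖ : ℂ) ^ 2)) L := fun t ↦ by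
    simp only [Kdl, normalv, h.periodic t, periodic_deriv h.periodic t]
  refine .of_periodic h.pos.le hper ?_
  have hkernel : ContinuousOn (fun t ↦ -(logDeriv (chordSlope l s) (t - s)).im)
      (Set.Icc (s - L / 2) (s + L / 2)) :=
    (Complex.continuous_im.comp_continuousOn (h.continuousOn_logDeriv_chordSlope_sub s)).neg
  have hvortex : Continuous fun t ↦ Complex.I * (x - l t) / (‖x - l t‖ : ℂ) ^ 2 := by
    have hl := h.contDiff.continuous
    refine Continuous.div (by fun_prop) (by fun_prop) fun t ↦ ?_
    simpa [sub_eq_zero] using (hx t).symm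
  -- Off unit speed the diagonal value of `Kdl` is not the limit of the kernel, but it is taken
  -- on a null set only.
  refine (hkernel.smul hvortex.continuousOn).integrableOn_Icc.congr_fun_ae ?_
  filter_upwards [ae_restrict_mem measurableSet_Icc, ae_restrict_of_ae (Measure.ae_ne volume s)]
    with t ht hts
  rw [h.Kdl_eq_neg_im_logDeriv (h.abs_lt_of_mem_Icc (sub_mem_Icc_neg ht)) hts]
  rfl

lemma hasPrincipalValue_dotR_smul (h : IsRegularSimpleClosed L l) {x : ℂ}
    (hx : ∀ t, l t ≠ x) (s : ℝ) :
    HasPrincipalValue (Set.Icc (s - L / 2) (s + L / 2)) s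
      (fun t ↦ (dotR (l s - l t) (deriv l t) / ‖l s - l t‖ ^ 2) •
        ((x - l t) / (‖x - l t‖ : ℂ) ^ 2))
      ((∫ t in 0..L, Kdl l s t • (Complex.I * (x - l t) / (‖x - l t‖ : ℂ) ^ 2)) +
        conj ((x - l s)⁻¹ * ((∫ t in 0..L, deriv l t / (l t - x)) - chordVariation l L s))) := by
  let T : ℂ →L[ℝ] ℂ :=
    (Complex.conjCLE : ℂ →L[ℝ] ℂ).comp (ContinuousLinearMap.mul ℝ ℂ (x - l s)⁻¹)
  have hcauchy := ((h.hasPrincipalValue_deriv_div_sub_of_notMem hx s).sub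
    (h.hasPrincipalValue_deriv_div_sub s)).clm_comp T
  refine ((h.hasPrincipalValue_Kdl_smul hx s).add hcauchy).congr measurableSet_Icc fun t ht hts ↦ ?_
  have hst : l s ≠ l t := h.apply_ne_apply (h.abs_lt_of_mem_Icc (sub_mem_Icc_neg ht)) hts
  exact (dotR_smul_eq_Kdl_smul_add hst (hx s) (hx t)).symm

end IsRegularSimpleClosed

theorem vortex_identity_exterior_general (L : ℝ) (l : ℝ → ℂ) (hl : IsRegularSimpleClosed L l)
    (horient : ∃ z₀ : ℂ, (∀ s, l s ≠ z₀) ∧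
      (∫ t in (0 : ℝ)..L, deriv l t / (l t - z₀)) = 2 * (π : ℂ) * Complex.I)
    (x : ℂ) (hx : ∀ s, l s ≠ x)
    (hwind : (∫ t in (0 : ℝ)..L, deriv l t / (l t - x)) = 0)
    (s₀ : ℝ) :
    HasPrincipalValue (Set.Icc (s₀ - L / 2) (s₀ + L / 2)) s₀
      (fun t ↦ (dotR (l s₀ - l t) (deriv l t) / ‖l s₀ - l t‖ ^ 2) •
        ((x - l t) / (‖x - l t‖ : ℂ) ^ 2))
      (π • (Complex.I * (x - l s₀) / (‖x - l s₀‖ : ℂ) ^ 2)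
        + ∫ t in (0 : ℝ)..L,
            Kdl l s₀ t • (Complex.I * (x - l t) / (‖x - l t‖ : ℂ) ^ 2)) := by
  obtain ⟨z₀, hz₀, hwind_z₀⟩ := horient
  have hvalue : conj ((x - l s₀)⁻¹ * (0 - π * Complex.I)) =
      π • (Complex.I * (x - l s₀) / (‖x - l s₀‖ : ℂ) ^ 2) := by
    rw [mul_div_assoc, div_norm_sq_eq_conj_inv, Complex.real_smul, zero_sub, map_mul, map_neg,
      map_mul, Complex.conj_ofReal, Complex.conj_I]
    ring
  have hpv := hl.hasPrincipalValue_dotR_smul hx s₀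
  rwa [hwind, hl.chordVariation_eq_pi_mul_I hz₀ hwind_z₀ hx hwind, hvalue,
    add_comm (∫ t in 0..L, _)] at hpv

end VortexIdentity

/-- The vortex identity: for `x` in the exterior domain and `y = l(s₀)` on the curve,
`π (x-y)^⊥/‖x-y‖²` equals the principal value integral of the tangential kernel against
the charge kernel minus the integral of the double layer kernel against the vortex
kernel. -/
theorem vortex_identity_exterior
    (L : ℝ) (hL : 0 < L) (l : ℝ → ℂ)
    (hsm : ContDiff ℝ (⊤ : ℕ∞) l) (hper : ∀ s, l (s + L) = l s)
    (harc : ∀ s, ‖deriv l s‖ = 1) (hinj : Set.InjOn l (Set.Ico 0 L))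
    (horient : ∃ z₀ : ℂ, (∀ s, l s ≠ z₀) ∧
      (∫ t in (0:ℝ)..L, deriv l t / (l t - z₀)) = 2 * (π : ℂ) * Complex.I)
    (x : ℂ) (hx : ∀ s, l s ≠ x)
    (hwind : (∫ t in (0:ℝ)..L, deriv l t / (l t - x)) = 0)
    (s₀ : ℝ) :
    Tendsto (fun ε : ℝ =>
        ∫ t in {t : ℝ | t ∈ Set.Icc (s₀ - L/2) (s₀ + L/2) ∧ ε ≤ |t - s₀|},
          (dotR (l s₀ - l t) (deriv l t) / ‖l s₀ - l t‖ ^ 2) •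
            ((x - l t) / (‖x - l t‖ : ℂ) ^ 2))
      (𝓝[>] 0)
      (𝓝 (π • (Complex.I * (x - l s₀) / (‖x - l s₀‖ : ℂ) ^ 2)
        + ∫ t in (0:ℝ)..L,
            Kdl l s₀ t • (Complex.I * (x - l t) / (‖x - l t‖ : ℂ) ^ 2))) :=
  (vortex_identity_exterior_general L l ⟨hL, contDiff_infty.1 hsm 2, hper,
    fun s hs ↦ by simpa [hs] using harc s, hinj⟩ horient x hx hwind s₀).tendsto
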